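/- Let X be a separable Hilbert space, Λ ⊂ ℕ a Hadamard lacunary set, and f ∈ H²_Λ(𝔻, X) with (f̂(k))_{k≥0} a completely relatively compact sequence. Then X_*(f) = X_∞(f). -/

import Mathlib

open scoped InnerProductSpace ENNReal
noncomputable section

/-- The Hardy space `H²(𝔻, X)` identified with `ℓ²(ℕ, X)`. -/
abbrev H2 (X : Type*) [NormedAddCommGroup X] [InnerProductSpace ℂ X] : Type _ :=
  lp (fun _ : ℕ => X) 2

variable {X : Type*} [NormedAddCommGroup X] [InnerProductSpace ℂ X]

/-- The backward shift `S*` on `H²(𝔻, X)`. -/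
def bshift (f : H2 X) : H2 X :=
  ⟨fun n => f (n + 1), by
    have h : Summable fun n : ℕ => ‖f n‖ ^ (2 : ℝ≥0∞).toReal :=
      (memℓp_gen_iff (by norm_num)).1 (lp.memℓp f)
    exact memℓp_gen ((summable_nat_add_iff 1).2 h)⟩

/-- `E_F`: the smallest closed `S*`-invariant subspace containing the family `F`. -/
def EF (F : Set (H2 X)) : Submodule ℂ (H2 X) :=
  (Submodule.span ℂ {g : H2 X | ∃ f ∈ F, ∃ n : ℕ, g = bshift^[n] f}).topologicalClosure

/-- `E_f` for a single function. -/
def Ef (f : H2 X) : Submodule ℂ (H2 X) :=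
  EF {f}

/-- `X_*(F) = ⋂_m closed-span {f̂(k) : k ≥ m, f ∈ F}`. -/
def XstarF (F : Set (H2 X)) : Submodule ℂ X :=
  ⨅ m : ℕ, (Submodule.span ℂ {x : X | ∃ f ∈ F, ∃ k ≥ m, x = f k}).topologicalClosure

def Xstar (f : H2 X) : Submodule ℂ X := XstarF {f}

/-- `P : X → X` is an orthogonal projection: idempotent and self-adjoint. -/
def IsOrthoProj {Y : Type*} [NormedAddCommGroup Y] [InnerProductSpace ℂ Y]
    (P : Y →L[ℂ] Y) : Prop :=
  (∀ x, P (P x) = P x) ∧ ∀ x y, ⟪P x, y⟫_ℂ = ⟪x, P y⟫_ℂ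

/-- A sequence in a Hilbert space is completely relatively compact if for every orthogonal
projection `P` the normalized sequence `{P aₖ / ‖P aₖ‖ : P aₖ ≠ 0}` is relatively compact. -/
def CRC {Y : Type*} [NormedAddCommGroup Y] [InnerProductSpace ℂ Y] (a : ℕ → Y) : Prop :=
  ∀ P : Y →L[ℂ] Y, IsOrthoProj P →
    IsCompact (closure {v : Y | ∃ k, P (a k) ≠ 0 ∧ v = ‖P (a k)‖⁻¹ • P (a k)})

/-- A subset of `ℕ` is Hadamard lacunary. -/
def HadLac (Λ : Set ℕ) : Prop :=
  ∃ d : ℝ, 1 < d ∧ ∀ m ∈ Λ, ∀ n ∈ Λ, m < n → d * m ≤ n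

/-- The Fourier spectrum. -/
def spec (f : H2 X) : Set ℕ := {k : ℕ | f k ≠ 0}

/-- `H²(𝔻, Y)` for a subspace `Y ⊆ X`, as a submodule of `H²(𝔻, X)`. -/
def H2sub (Y : Submodule ℂ X) : Submodule ℂ (H2 X) where
  carrier := {g : H2 X | ∀ n, g n ∈ Y}
  add_mem' := by
    intro a b ha hb n
    have : (↑(a + b) : ∀ _ : ℕ, X) n = a n + b n := by
      rw [lp.coeFn_add]; rfl
    rw [this]
    exact Y.add_mem (ha n) (hb n)
  zero_mem' := by
    intro n
    have : (↑(0 : H2 X) : ∀ _ : ℕ, X) n = 0 := by rw [lp.coeFn_zero]; rfl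
    rw [this]
    exact Y.zero_mem
  smul_mem' := by
    intro c a ha n
    have : (↑(c • a) : ∀ _ : ℕ, X) n = c • a n := by rw [lp.coeFn_smul]; rfl
    rw [this]
    exact Y.smul_mem c (ha n)

/-- A polynomial: finitely many nonzero Taylor coefficients. -/
def PolyH2 (f : H2 X) : Prop := {n : ℕ | f n ≠ 0}.Finite


/-- `X_∞(f)`: the closed span of all closed subspaces `Y ⊆ X` with
`H²(𝔻, Y) ⊆ E_{S*^N f}` for every `N ≥ 0`. -/
def Xinf (f : H2 X) : Submodule ℂ X :=
  (Submodule.span ℂ {x : X | ∃ Y : Submodule ℂ X, IsClosed (Y : Set X) ∧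
      (∀ N : ℕ, H2sub Y ≤ Ef (bshift^[N] f)) ∧ x ∈ Y}).topologicalClosure

/-- The smallest closed `S*^N`-invariant subspace containing `f`;
`f` is cyclic for `S*^N` iff this equals `⊤`. -/
def EfPow (f : H2 X) (N : ℕ) : Submodule ℂ (H2 X) :=
  (Submodule.span ℂ {g : H2 X | ∃ k : ℕ, g = bshift^[N * k] f}).topologicalClosure


/-!
Write `E_N = E_{S*^N f}`. If `g ⟂ E_N`, then for each `p` and all large `m` the relation
`∑ⱼ ⟪ĝ(j), f̂(j + m - p)⟫ = 0` has no terms with `j < p`, because the gaps of the spectrum tend to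
infinity. Cauchy–Schwarz then bounds `|⟪ĝ(p), f̂(m)⟫|²` by `G(m) ∑_{l > m} ‖f̂(l)‖²`, where `G(m)`
is the sum of `‖ĝ(p + i)‖²` over the `i > 0` with `m + i` in the spectrum. The weight `G` is
summable over the spectrum because each difference occurs boundedly often there.

Let `Q` be the projection onto the closed span of all coefficients of all `g ⟂ E_N`. Compactness of
the directions of `Q f̂(m)` turns these bounds into one for `‖Q f̂(m)‖²` itself, and a summable
sequence dominated in this way by its own tails vanishes eventually. Hence `X_*(f)` is orthogonal
to all coefficients of elements of `E_Nᗮ`, so `H²(𝔻, X_*(f)) ⊆ E_Nᗮᗮ = E_N`.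
-/

section

open Filter Topology Function

/-- `Λ` has bounded difference multiplicity: the number of representations of `i` as a difference of
two elements of `Λ` is bounded uniformly in `i ≠ 0`. Lacunary sets and Sidon sets are examples. -/
def BoundedDiffMult (Λ : Set ℕ) : Prop :=
  ∃ M : ℕ, ∀ i ≠ 0, {m | m ∈ Λ ∧ m + i ∈ Λ}.encard ≤ M

theorem BoundedDiffMult.eventually_gap {Λ : Set ℕ} (hΛ : BoundedDiffMult Λ) (p : ℕ) :
    ∀ᶠ n in atTop, n ∈ Λ → ∀ m ∈ Λ, m < n → m + p < n := by
  obtain ⟨M, hM⟩ := hΛ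
  have eventually_diff_ne (i : ℕ) (hi : i ≠ 0) :
      ∀ᶠ n in atTop, n ∈ Λ → ∀ m ∈ Λ, m + i ≠ n := by
    have hfin : {m | m ∈ Λ ∧ m + i ∈ Λ}.Finite :=
      Set.finite_of_encard_le_coe (hM i hi)
    rw [← Nat.cofinite_eq_atTop]
    filter_upwards [(hfin.image (· + i)).eventually_cofinite_notMem] with n hn hnΛ m hm hmn
    exact hn ⟨m, ⟨hm, hmn ▸ hnΛ⟩, hmn⟩
  have eventually_diffs_ne : ∀ᶠ n in atTop, ∀ i ∈ Finset.Icc 1 p, n ∈ Λ → ∀ m ∈ Λ, m + i ≠ n :=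
    (eventually_all_finset _).2 fun i hi =>
      eventually_diff_ne i (Nat.one_le_iff_ne_zero.1 (Finset.mem_Icc.1 hi).1)
  filter_upwards [eventually_diffs_ne] with n hn hnΛ m hm hmn
  by_contra! hnp
  exact hn (n - m) (Finset.mem_Icc.2 (by omega)) hnΛ m hm (by omega)

theorem pow_card_mul_le_of_geometric_growth {Λ : Set ℕ} {d a : ℝ} (hd : 0 < d)
    (hΛ : ∀ m ∈ Λ, ∀ n ∈ Λ, m < n → d * m ≤ n) (s : Finset ℕ) (hsΛ : ↑s ⊆ Λ)
    (has : ∀ n ∈ s, a ≤ n) {b : ℝ} (hab : a ≤ d * b) (hsb : ∀ n ∈ s, (n : ℝ) ≤ b) :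
    d ^ s.card * a ≤ d * b := by
  induction s using Finset.induction_on_max generalizing b with
  | empty => simpa using hab
  | insert x s hx ih =>
    simp only [Finset.coe_insert, Set.insert_subset_iff, Finset.mem_insert, forall_eq_or_imp]
      at hsΛ has hsb
    have hxd : d * (x / d) = x := mul_div_cancel₀ _ hd.ne'
    have hs : ∀ n ∈ s, (n : ℝ) ≤ x / d := fun n hn => by
      rw [le_div_iff₀' hd]
      exact hΛ n (hsΛ.2 hn) x hsΛ.1 (hx n hn)
    have hsx : d ^ s.card * a ≤ x := hxd ▸ ih hsΛ.2 has.2 (hxd.symm ▸ has.1) hs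
    rw [Finset.card_insert_of_notMem fun h => (hx x h).false, pow_succ', mul_assoc]
    gcongr
    exact hsx.trans hsb.1

theorem HadLac.boundedDiffMult {Λ : Set ℕ} (hΛ : HadLac Λ) : BoundedDiffMult Λ := by
  obtain ⟨d, hd, hgrowth⟩ := hΛ
  have hd1 : 0 < d - 1 := sub_pos.2 hd
  obtain ⟨M, hM⟩ := pow_unbounded_of_one_lt (d * (d / (d - 1))) hd
  refine ⟨M, fun i hi => ?_⟩
  have hi0 : (0 : ℝ) < i := by positivity
  by_contra! hcard
  obtain ⟨t, htΛ, ht⟩ := Set.exists_subset_encard_eq hcard.le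
  lift t to Finset ℕ using Set.finite_of_encard_eq_coe ht
  rw [Set.encard_coe_eq_coe_finsetCard, Nat.cast_inj] at ht
  -- If `m` and `m + i` lie in `Λ`, then `d * m ≤ m + i` confines `m + i` to `[i, i * d / (d - 1)]`.
  have upper : ∀ m ∈ t, ((m + i : ℕ) : ℝ) ≤ d / (d - 1) * i := fun m hm => by
    have := hgrowth m (htΛ hm).1 (m + i) (htΛ hm).2 (by omega)
    rw [div_mul_eq_mul_div, le_div_iff₀ hd1]
    push_cast at this ⊢
    linarith
  have hC : 1 ≤ d * (d / (d - 1)) :=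
    one_le_mul_of_one_le_of_one_le hd.le ((one_le_div hd1).2 (by linarith))
  have card_bound := pow_card_mul_le_of_geometric_growth (a := i) (b := d / (d - 1) * i)
    (one_pos.trans hd) hgrowth (t.map (addRightEmbedding i)) (by
      rintro _ hn
      obtain ⟨m, hm, rfl⟩ := Finset.mem_map.1 hn
      exact (htΛ hm).2)
    (by simp) (by rw [← mul_assoc]; exact le_mul_of_one_le_left hi0.le hC) (by simpa using upper)
  rw [Finset.card_map, ht, ← mul_assoc] at card_bound
  exact hM.not_ge (le_of_mul_le_mul_right card_bound hi0)

theorem summable_tsum_indicator_of_encard_le {ι κ : Type*} {A : ι → Set κ} {M : ℕ}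
    (hA : ∀ i, (A i).encard ≤ M) {q : ι → ℝ} (hq0 : 0 ≤ q) (hq : Summable q) :
    Summable fun m => ∑' i, {i | m ∈ A i}.indicator q i := by
  classical
  let F : ι × κ → ℝ := fun x => {i | x.2 ∈ A i}.indicator q x.1
  have hF0 : 0 ≤ F := fun x => Set.indicator_nonneg (fun i _ => hq0 i) _
  have row_le (i : ι) (s : Finset κ) : ∑ m ∈ s, F (i, m) ≤ M * q i := by
    have hcard : ((s.filter (· ∈ A i)).card : ℕ∞) ≤ M := by
      rw [← Set.encard_coe_eq_coe_finsetCard]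
      exact (Set.encard_le_encard fun m hm => (Finset.mem_filter.1 hm).2).trans (hA i)
    simp only [F, Set.indicator_apply, Set.mem_ofPred_eq]
    rw [← Finset.sum_filter, Finset.sum_const, nsmul_eq_mul]
    exact mul_le_mul_of_nonneg_right (mod_cast hcard) (hq0 i)
  have row_summable (i : ι) : Summable fun m => F (i, m) :=
    summable_of_sum_le (fun _ => hF0 _) (row_le i)
  have hF : Summable F := (summable_prod_of_nonneg hF0).2 ⟨row_summable,
    .of_nonneg_of_le (fun i => tsum_nonneg fun m => hF0 _)
      (fun i => (row_summable i).tsum_le_of_sum_le (row_le i)) (hq.mul_left (M : ℝ))⟩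
  exact hF.prod_symm.prod

theorem BoundedDiffMult.summable_tsum_indicator {Λ : Set ℕ} (hΛ : BoundedDiffMult Λ) {q : ℕ → ℝ}
    (hq0 : 0 ≤ q) (hq : Summable q) :
    Summable fun m => ∑' i, {i | m ∈ Λ ∧ m + (i + 1) ∈ Λ}.indicator q i :=
  let ⟨_, hM⟩ := hΛ
  summable_tsum_indicator_of_encard_le (fun i => hM (i + 1) i.succ_ne_zero) hq0 hq

/-- The tail `∑_{l ≥ m} b l` of a series, with value `0` if the series diverges. -/
def tailSum (b : ℕ → ℝ) (m : ℕ) : ℝ :=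
  ∑' l, b (l + m)

theorem tailSum_nonneg {b : ℕ → ℝ} (hb0 : 0 ≤ b) (m : ℕ) : 0 ≤ tailSum b m :=
  tsum_nonneg fun _ => hb0 _

theorem tailSum_antitone {b : ℕ → ℝ} (hb0 : 0 ≤ b) (hb : Summable b) : Antitone (tailSum b) := by
  refine antitone_nat_of_succ_le fun m => ?_
  have h := ((summable_nat_add_iff m).2 hb).tsum_eq_zero_add
  have htail : tailSum b (m + 1) = ∑' l, b (l + 1 + m) := by
    simp only [tailSum, add_assoc, add_comm 1]
  rw [htail, tailSum, h]
  exact le_add_of_nonneg_left (hb0 _)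

/-- `a` is dominated by the tails of `b`: eventually `a m ≤ G m * ∑_{l > m} b l` for a summable
nonnegative weight `G`. -/
def TailDominated (a b : ℕ → ℝ) : Prop :=
  ∃ G : ℕ → ℝ, Summable G ∧ 0 ≤ G ∧ ∀ᶠ m in atTop, a m ≤ G m * tailSum b (m + 1)

namespace TailDominated

variable {a a' b : ℕ → ℝ}

theorem zero (b : ℕ → ℝ) : TailDominated 0 b :=
  ⟨0, summable_zero, le_rfl, by simp⟩

theorem mono (h : TailDominated a' b) (haa' : a ≤ a') : TailDominated a b := by
  obtain ⟨G, hG, hG0, hle⟩ := h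
  exact ⟨G, hG, hG0, hle.mono fun m hm => (haa' m).trans hm⟩

theorem add (h : TailDominated a b) (h' : TailDominated a' b) : TailDominated (a + a') b := by
  obtain ⟨G, hG, hG0, hle⟩ := h
  obtain ⟨G', hG', hG0', hle'⟩ := h'
  refine ⟨G + G', hG.add hG', add_nonneg hG0 hG0', ?_⟩
  filter_upwards [hle, hle'] with m hm hm'
  simpa only [Pi.add_apply, add_mul] using add_le_add hm hm'

theorem const_mul (h : TailDominated a b) {c : ℝ} (hc : 0 ≤ c) :
    TailDominated (fun m => c * a m) b := by
  obtain ⟨G, hG, hG0, hle⟩ := h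
  refine ⟨fun m => c * G m, hG.mul_left c, fun m => mul_nonneg hc (hG0 m), ?_⟩
  filter_upwards [hle] with m hm
  simpa only [mul_assoc] using mul_le_mul_of_nonneg_left hm hc

theorem of_isCompact {E : Type*} [TopologicalSpace E] {K : Set E} (hK : IsCompact K) {v : ℕ → E}
    (ha0 : 0 ≤ a) (hvK : ∀ m, a m ≠ 0 → v m ∈ K)
    (hloc : ∀ x ∈ K, ∃ U ∈ 𝓝 x, TailDominated ((v ⁻¹' U).indicator a) b) : TailDominated a b := by
  have hKdom : TailDominated ((v ⁻¹' K).indicator a) b := by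
    refine hK.induction_on (p := fun A => TailDominated ((v ⁻¹' A).indicator a) b) ?_ ?_ ?_ ?_
    · simpa only [Set.preimage_empty, Set.indicator_empty'] using zero b
    · exact fun A A' hAA' h =>
        h.mono (Set.indicator_le_indicator_of_subset (Set.preimage_mono hAA') ha0)
    · refine fun A A' h h' => (h.add h').mono ?_
      rw [Set.preimage_union, ← Set.indicator_union_add_inter]
      exact le_add_of_nonneg_right (Set.indicator_nonneg fun m _ => ha0 m)
    · intro x hx
      obtain ⟨U, hU, h⟩ := hloc x hx
      exact ⟨U, mem_nhdsWithin_of_mem_nhds hU, h⟩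
  have hsupp : support a ⊆ v ⁻¹' K := hvK
  rwa [Set.indicator_eq_self.2 hsupp] at hKdom

theorem eventually_eq_zero (h : TailDominated b b) (hb0 : 0 ≤ b) (hb : Summable b) :
    ∀ᶠ m in atTop, b m = 0 := by
  obtain ⟨G, hG, hG0, hle⟩ := h
  obtain ⟨M, hθ, hM⟩ := (((tendsto_sum_nat_add G).eventually_lt_const one_pos).and
    (eventually_forall_ge_atTop.2 hle)).exists
  have hbM : Summable fun l => b (l + M) := (summable_nat_add_iff M).2 hb
  have hGM : Summable fun l => G (l + M) := (summable_nat_add_iff M).2 hG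
  have self_le : tailSum b M ≤ (∑' l, G (l + M)) * tailSum b M := by
    rw [← tsum_mul_right]
    refine hbM.tsum_le_tsum (fun l => ?_) (hGM.mul_right _)
    exact (hM (l + M) (by omega)).trans
      (mul_le_mul_of_nonneg_left (tailSum_antitone hb0 hb (by omega)) (hG0 _))
  have tail_eq_zero : tailSum b M = 0 := by
    have := tailSum_nonneg hb0 M
    nlinarith
  filter_upwards [eventually_ge_atTop M] with m hm
  have hfun := (hasSum_zero_iff_of_nonneg fun l => hb0 (l + M)).1 (hbM.hasSum_iff.2 tail_eq_zero)
  simpa [Nat.sub_add_cancel hm] using congrFun hfun (m - M)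

end TailDominated

section InnerProduct

variable {𝕜 E : Type*} [RCLike 𝕜] [NormedAddCommGroup E] [InnerProductSpace 𝕜 E]

theorem norm_sq_le_tsum_indicator_mul_tsum {ι : Type*} {g u : ι → E} {A : Set ι} {c : 𝕜}
    (hg : Summable fun i => ‖g i‖ ^ 2) (hu : Summable fun i => ‖u i‖ ^ 2) (huA : support u ⊆ A)
    (hc : HasSum (fun i => ⟪g i, u i⟫_𝕜) c) :
    ‖c‖ ^ 2 ≤ (∑' i, A.indicator (fun i => ‖g i‖ ^ 2) i) * ∑' i, ‖u i‖ ^ 2 := by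
  have term_le (i : ι) : ‖⟪g i, u i⟫_𝕜‖ ≤ A.indicator (fun i => ‖g i‖) i * ‖u i‖ := by
    by_cases hi : i ∈ A
    · simpa [hi] using norm_inner_le_norm (𝕜 := 𝕜) (g i) (u i)
    · simp [notMem_support.1 fun h => hi (huA h)]
  have indicator_sq (i : ι) :
      A.indicator (fun i => ‖g i‖) i ^ 2 = A.indicator (fun i => ‖g i‖ ^ 2) i := by
    by_cases hi : i ∈ A <;> simp [hi]
  refine le_of_tendsto' (hc.norm.pow 2) fun s => ?_
  calc ‖∑ i ∈ s, ⟪g i, u i⟫_𝕜‖ ^ 2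
      ≤ (∑ i ∈ s, A.indicator (fun i => ‖g i‖) i * ‖u i‖) ^ 2 := by
        gcongr
        exact (norm_sum_le _ _).trans (Finset.sum_le_sum fun i _ => term_le i)
    _ ≤ (∑ i ∈ s, A.indicator (fun i => ‖g i‖) i ^ 2) * ∑ i ∈ s, ‖u i‖ ^ 2 :=
        Finset.sum_mul_sq_le_sq_mul_sq _ _ _
    _ ≤ (∑' i, A.indicator (fun i => ‖g i‖ ^ 2) i) * ∑' i, ‖u i‖ ^ 2 := by
        simp only [indicator_sq]
        have h0 (i : ι) : 0 ≤ A.indicator (fun i => ‖g i‖ ^ 2) i :=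
          Set.indicator_nonneg (fun i _ => sq_nonneg ‖g i‖) i
        gcongr
        · exact tsum_nonneg h0
        · exact (hg.indicator A).sum_le_tsum s fun i _ => h0 i
        · exact hu.sum_le_tsum s fun i _ => sq_nonneg _

variable (𝕜) in
/-- The sequence `g` is orthogonal in `ℓ²` to all sufficiently high backward shifts of `u`. -/
def EventuallyShiftOrthogonal (g u : ℕ → E) : Prop :=
  ∀ᶠ n in atTop, HasSum (fun j => ⟪g j, u (j + n)⟫_𝕜) 0

theorem hasSum_inner_after_of_hasSum_inner_shift {g u : ℕ → E} {m p : ℕ} (hpm : p ≤ m)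
    (h : HasSum (fun j => ⟪g j, u (j + (m - p))⟫_𝕜) 0) (hu : ∀ j < p, u (j + (m - p)) = 0) :
    HasSum (fun i => ⟪g (i + (p + 1)), u (i + (m + 1))⟫_𝕜) (-⟪g p, u m⟫_𝕜) := by
  have early_terms : ∑ j ∈ Finset.range p, ⟪g j, u (j + (m - p))⟫_𝕜 = 0 :=
    Finset.sum_eq_zero fun j hj => by rw [hu j (Finset.mem_range.1 hj), inner_zero_right]
  have hshift (i : ℕ) : i + (p + 1) + (m - p) = i + (m + 1) := by omega
  simpa only [Finset.sum_range_succ, early_terms, zero_add, zero_sub, hshift,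
    Nat.add_sub_cancel' hpm] using (hasSum_nat_add_iff' (p + 1)).2 h

theorem EventuallyShiftOrthogonal.tailDominated {Λ : Set ℕ} (hΛ : BoundedDiffMult Λ) {g u : ℕ → E}
    (h : EventuallyShiftOrthogonal 𝕜 g u) (hg : Summable fun n => ‖g n‖ ^ 2)
    (hu : Summable fun n => ‖u n‖ ^ 2) (huΛ : support u ⊆ Λ) (p : ℕ) :
    TailDominated (fun m => ‖⟪g p, u m⟫_𝕜‖ ^ 2) fun m => ‖u m‖ ^ 2 := by
  let q (i : ℕ) : ℝ := ‖g (i + (p + 1))‖ ^ 2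
  have hq0 : 0 ≤ q := fun i => sq_nonneg _
  have hq : Summable q := (summable_nat_add_iff (f := fun n => ‖g n‖ ^ 2) (p + 1)).2 hg
  have hG0 (m : ℕ) : 0 ≤ ∑' i, {i | m ∈ Λ ∧ m + (i + 1) ∈ Λ}.indicator q i :=
    tsum_nonneg (Set.indicator_nonneg fun i _ => hq0 i)
  refine ⟨_, hΛ.summable_tsum_indicator hq0 hq, hG0, ?_⟩
  filter_upwards [(tendsto_sub_atTop_nat p).eventually h, eventually_ge_atTop p,
    hΛ.eventually_gap p] with m horth hpm hgap
  by_cases hum : u m = 0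
  · simpa [hum] using mul_nonneg (hG0 m) (tailSum_nonneg (fun n => sq_nonneg ‖u n‖) (m + 1))
  have hmΛ : m ∈ Λ := huΛ hum
  have early_zero (j : ℕ) (hj : j < p) : u (j + (m - p)) = 0 := by
    by_contra hne
    have := hgap hmΛ _ (huΛ hne) (by omega)
    omega
  have late_support :
      support (fun i => u (i + (m + 1))) ⊆ {i | m ∈ Λ ∧ m + (i + 1) ∈ Λ} := fun i hi => by
    have hiΛ : i + (m + 1) ∈ Λ := huΛ hi
    exact ⟨hmΛ, by rwa [add_left_comm] at hiΛ⟩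
  have hu_tail : Summable fun i => ‖u (i + (m + 1))‖ ^ 2 :=
    (summable_nat_add_iff (f := fun n => ‖u n‖ ^ 2) (m + 1)).2 hu
  rw [← norm_neg]
  exact norm_sq_le_tsum_indicator_mul_tsum hq hu_tail late_support
    (hasSum_inner_after_of_hasSum_inner_shift hpm horth early_zero)

theorem eventually_eq_zero_of_isCompact_directions {Λ : Set ℕ} (hΛ : BoundedDiffMult Λ)
    {u : ℕ → E} (hu : Summable fun n => ‖u n‖ ^ 2) (huΛ : support u ⊆ Λ) {K : Set E}
    (hK : IsCompact K) (huK : ∀ m, u m ≠ 0 → ((‖u m‖⁻¹ : ℝ) : 𝕜) • u m ∈ K)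
    (hsep : ∀ v ∈ K, ∃ g : ℕ → E, (Summable fun n => ‖g n‖ ^ 2) ∧
      EventuallyShiftOrthogonal 𝕜 g u ∧ ∃ p, ⟪g p, v⟫_𝕜 ≠ 0) :
    ∀ᶠ m in atTop, u m = 0 := by
  have hu0 : 0 ≤ fun m => ‖u m‖ ^ 2 := fun m => sq_nonneg _
  suffices TailDominated (fun m => ‖u m‖ ^ 2) fun m => ‖u m‖ ^ 2 by
    simpa using this.eventually_eq_zero hu0 hu
  refine .of_isCompact hK hu0 (fun m hm => huK m (by simpa using hm)) fun v hv => ?_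
  obtain ⟨g, hg, horth, p, hgv⟩ := hsep v hv
  obtain ⟨c, hc0, hcv⟩ := exists_between (norm_pos_iff.2 hgv)
  have hU : {w : E | c < ‖⟪g p, w⟫_𝕜‖} ∈ 𝓝 v :=
    (isOpen_lt continuous_const (by fun_prop)).mem_nhds hcv
  refine ⟨_, hU, ((horth.tailDominated hΛ hg hu huΛ p).const_mul
    (inv_nonneg.2 (sq_nonneg c))).mono fun m => ?_⟩
  refine Set.indicator_apply_le' (fun hm => ?_) fun _ => by positivity
  have hum : 0 < ‖u m‖ := norm_pos_iff.2 fun h => by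
    simp only [Set.mem_preimage, Set.mem_ofPred_eq, h, smul_zero, inner_zero_right, norm_zero] at hm
    exact hc0.not_gt hm
  have hcu : c * ‖u m‖ < ‖⟪g p, u m⟫_𝕜‖ := by
    simpa [inner_smul_right, inv_mul_eq_div, lt_div_iff₀ hum] using hm
  change ‖u m‖ ^ 2 ≤ (c ^ 2)⁻¹ * ‖⟪g p, u m⟫_𝕜‖ ^ 2
  rw [inv_mul_eq_div, le_div_iff₀' (by positivity), ← mul_pow]
  gcongr

theorem exists_inner_ne_zero_of_mem_topologicalClosure_span {S : Set E} {v : E}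
    (hv : v ∈ (Submodule.span 𝕜 S).topologicalClosure) (hv0 : v ≠ 0) :
    ∃ x ∈ S, ⟪x, v⟫_𝕜 ≠ 0 := by
  by_contra! hS
  have hle : (Submodule.span 𝕜 S).topologicalClosure ≤ (𝕜 ∙ v)ᗮ :=
    Submodule.topologicalClosure_minimal _
      (Submodule.span_le.2 fun x hx =>
        Submodule.mem_orthogonal_singleton_iff_inner_left.2 (hS x hx))
      (Submodule.isClosed_orthogonal _)
  exact hv0 (inner_self_eq_zero.1 (Submodule.mem_orthogonal_singleton_iff_inner_left.1 (hle hv)))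

end InnerProduct

theorem isOrthoProj_starProjection (W : Submodule ℂ X) [W.HasOrthogonalProjection] :
    IsOrthoProj W.starProjection :=
  ⟨fun x => Submodule.starProjection_eq_self_iff.2 (W.starProjection_apply_mem x),
    W.inner_starProjection_left_eq_right⟩

theorem CRC.exists_isCompact_directions {a : ℕ → X} (ha : CRC a) (W : Submodule ℂ X)
    [W.HasOrthogonalProjection] (hW : IsClosed (W : Set X)) :
    ∃ K : Set X, IsCompact K ∧ (∀ v ∈ K, v ∈ W ∧ v ≠ 0) ∧
      ∀ m, W.starProjection (a m) ≠ 0 →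
        ‖W.starProjection (a m)‖⁻¹ • W.starProjection (a m) ∈ K := by
  refine ⟨_, ha _ (isOrthoProj_starProjection W), fun v hv => ?_,
    fun m hm => subset_closure ⟨m, hm, rfl⟩⟩
  have hclosed : IsClosed ((W : Set X) ∩ Metric.sphere 0 1) := hW.inter Metric.isClosed_sphere
  have hvW := closure_minimal (t := (W : Set X) ∩ Metric.sphere 0 1) ?_ hclosed hv
  · exact ⟨hvW.1, ne_zero_of_mem_unit_sphere ⟨v, hvW.2⟩⟩
  · rintro _ ⟨k, hk, rfl⟩
    refine ⟨?_, by simp [norm_smul, hk]⟩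
    rw [← Complex.coe_smul]
    exact W.smul_mem _ (W.starProjection_apply_mem _)

theorem H2.summable_norm_sq (f : H2 X) : Summable fun n => ‖f n‖ ^ 2 := by
  simpa using (lp.memℓp f).summable (by norm_num)

theorem bshift_iterate_apply (f : H2 X) (n k : ℕ) : (bshift^[n] f) k = f (k + n) := by
  induction n generalizing k with
  | zero => rfl
  | succ n ih =>
    rw [iterate_succ_apply', ← Nat.succ_add_eq_add_succ]
    exact ih (k + 1)

theorem isClosed_Ef (f : H2 X) : IsClosed (Ef f : Set (H2 X)) :=
  Submodule.isClosed_topologicalClosure _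

theorem bshift_iterate_mem_Ef (f : H2 X) (n : ℕ) : bshift^[n] f ∈ Ef f :=
  Submodule.le_topologicalClosure _ (Submodule.subset_span ⟨f, rfl, n, rfl⟩)

theorem Ef_le {f : H2 X} {M : Submodule ℂ (H2 X)} (hM : IsClosed (M : Set (H2 X)))
    (h : ∀ n, bshift^[n] f ∈ M) : Ef f ≤ M := by
  refine Submodule.topologicalClosure_minimal _ (Submodule.span_le.2 ?_) hM
  rintro _ ⟨_, rfl, n, rfl⟩
  exact h n

theorem isClosed_H2sub {Y : Submodule ℂ X} (hY : IsClosed (Y : Set X)) :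
    IsClosed (H2sub Y : Set (H2 X)) := by
  have : (H2sub Y : Set (H2 X)) = ⋂ n, (fun g : H2 X => g n) ⁻¹' Y := by
    ext g
    simp [H2sub]
  rw [this]
  exact isClosed_iInter fun n => hY.preimage (lp.evalCLM ℂ (fun _ : ℕ => X) 2 n).continuous

theorem single_mem_H2sub {Y : Submodule ℂ X} {x : X} (hx : x ∈ Y) (k : ℕ) :
    lp.single 2 k x ∈ H2sub Y := by
  intro n
  rcases eq_or_ne n k with rfl | hn
  · simpa using hx
  · simp [hn]

/-- The closed span of the coefficients `f̂(k)` with `k ≥ m`, so that `X_*(f)` is the intersection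
of these subspaces. -/
def tailSpan (f : H2 X) (m : ℕ) : Submodule ℂ X :=
  (Submodule.span ℂ {x | ∃ k ≥ m, x = f k}).topologicalClosure

theorem isClosed_tailSpan (f : H2 X) (m : ℕ) : IsClosed (tailSpan f m : Set X) :=
  Submodule.isClosed_topologicalClosure _

theorem Xstar_eq_iInf_tailSpan (f : H2 X) : Xstar f = ⨅ m, tailSpan f m := by
  simp [Xstar, XstarF, tailSpan]

theorem isClosed_Xstar (f : H2 X) : IsClosed (Xstar f : Set X) := by
  rw [Xstar_eq_iInf_tailSpan, Submodule.coe_iInf]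
  exact isClosed_iInter (isClosed_tailSpan f)

theorem Xstar_le_of_eventually_mem {f : H2 X} {Z : Submodule ℂ X} (hZ : IsClosed (Z : Set X))
    (h : ∀ᶠ m in atTop, f m ∈ Z) : Xstar f ≤ Z := by
  obtain ⟨M, hM⟩ := eventually_atTop.1 h
  rw [Xstar_eq_iInf_tailSpan]
  refine (iInf_le _ M).trans (Submodule.topologicalClosure_minimal _ (Submodule.span_le.2 ?_) hZ)
  rintro _ ⟨k, hk, rfl⟩
  exact hM k hk

theorem Ef_bshift_iterate_le_H2sub_tailSpan (f : H2 X) (m : ℕ) :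
    Ef (bshift^[m] f) ≤ H2sub (tailSpan f m) := by
  refine Ef_le (isClosed_H2sub (isClosed_tailSpan f m)) fun n k => ?_
  rw [bshift_iterate_apply, bshift_iterate_apply]
  exact Submodule.le_topologicalClosure _ (Submodule.subset_span ⟨_, by omega, rfl⟩)

theorem le_Xinf {f : H2 X} {Y : Submodule ℂ X} (hY : IsClosed (Y : Set X))
    (h : ∀ N, H2sub Y ≤ Ef (bshift^[N] f)) : Y ≤ Xinf f := fun _ hx =>
  Submodule.le_topologicalClosure _ (Submodule.subset_span ⟨Y, hY, h, hx⟩)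

theorem Xinf_le_Xstar (f : H2 X) : Xinf f ≤ Xstar f := by
  refine Submodule.topologicalClosure_minimal _ (Submodule.span_le.2 ?_) (isClosed_Xstar f)
  rintro x ⟨Y, -, hY, hx⟩
  rw [SetLike.mem_coe, Xstar_eq_iInf_tailSpan, Submodule.mem_iInf]
  intro m
  simpa using Ef_bshift_iterate_le_H2sub_tailSpan f m (hY m (single_mem_H2sub hx 0)) 0

/-- The closed span in `X` of all Taylor coefficients of all members of a subspace of
`H²(𝔻, X)`. -/
def coeffSpan (M : Submodule ℂ (H2 X)) : Submodule ℂ X :=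
  (Submodule.span ℂ {x | ∃ g ∈ M, ∃ n : ℕ, x = g n}).topologicalClosure

theorem isClosed_coeffSpan (M : Submodule ℂ (H2 X)) : IsClosed (coeffSpan M : Set X) :=
  Submodule.isClosed_topologicalClosure _

theorem coeff_mem_coeffSpan {M : Submodule ℂ (H2 X)} {g : H2 X} (hg : g ∈ M) (n : ℕ) :
    g n ∈ coeffSpan M :=
  Submodule.le_topologicalClosure _ (Submodule.subset_span ⟨g, hg, n, rfl⟩)

theorem H2sub_orthogonal_coeffSpan_le (M : Submodule ℂ (H2 X)) : H2sub (coeffSpan M)ᗮ ≤ Mᗮ := by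
  intro h hh g hg
  have hzero (n : ℕ) : ⟪g n, h n⟫_ℂ = 0 :=
    Submodule.inner_right_of_mem_orthogonal (coeff_mem_coeffSpan hg n) (hh n)
  simp [lp.inner_eq_tsum, hzero]

theorem hasSum_inner_shift_of_mem_orthogonal_Ef {f g : H2 X} {N n : ℕ}
    (hg : g ∈ (Ef (bshift^[N] f))ᗮ) (hn : N ≤ n) : HasSum (fun j => ⟪g j, f (j + n)⟫_ℂ) 0 := by
  have hmem : bshift^[n] f ∈ Ef (bshift^[N] f) := by
    have := bshift_iterate_mem_Ef (bshift^[N] f) (n - N)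
    rwa [← iterate_add_apply, Nat.sub_add_cancel hn] at this
  have h := lp.hasSum_inner (𝕜 := ℂ) g (bshift^[n] f)
  rw [Submodule.inner_left_of_mem_orthogonal hmem hg] at h
  simpa only [bshift_iterate_apply] using h

theorem eventually_mem_orthogonal_coeffSpan [CompleteSpace X] {Λ : Set ℕ}
    (hΛ : BoundedDiffMult Λ) {f : H2 X} (hspec : spec f ⊆ Λ) (hcrc : CRC fun k : ℕ => f k)
    (N : ℕ) : ∀ᶠ m in atTop, f m ∈ (coeffSpan (Ef (bshift^[N] f))ᗮ)ᗮ := by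
  set W := coeffSpan (Ef (bshift^[N] f))ᗮ
  have hWclosed : IsClosed (W : Set X) := isClosed_coeffSpan _
  have : CompleteSpace W := hWclosed.completeSpace_coe
  obtain ⟨K, hK, hKW, hdir⟩ := hcrc.exists_isCompact_directions W hWclosed
  have hsummable : Summable fun m => ‖W.starProjection (f m)‖ ^ 2 :=
    .of_nonneg_of_le (fun m => sq_nonneg _)
      (fun m => by gcongr; exact W.norm_starProjection_apply_le (f m)) f.summable_norm_sq
  have hsupport : support (fun m => W.starProjection (f m)) ⊆ Λ := fun m hm =>
    hspec fun h0 => hm (by simp [h0])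
  have horth {g : H2 X} (hg : g ∈ (Ef (bshift^[N] f))ᗮ) :
      EventuallyShiftOrthogonal ℂ g fun m => W.starProjection (f m) := by
    filter_upwards [eventually_ge_atTop N] with n hn
    have hgW (j : ℕ) : W.starProjection (g j) = g j :=
      Submodule.starProjection_eq_self_iff.2 (coeff_mem_coeffSpan hg j)
    simpa only [← W.inner_starProjection_left_eq_right, hgW] using
      hasSum_inner_shift_of_mem_orthogonal_Ef hg hn
  have hzero := eventually_eq_zero_of_isCompact_directions (𝕜 := ℂ) hΛ hsummable hsupport hK
    (fun m hm => by
      have hmK := hdir m hm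
      rwa [← Complex.coe_smul] at hmK) fun v hv => by
      obtain ⟨_, ⟨g, hg, p, rfl⟩, hgv⟩ :=
        exists_inner_ne_zero_of_mem_topologicalClosure_span (hKW v hv).1 (hKW v hv).2
      exact ⟨g, H2.summable_norm_sq g, horth hg, p, hgv⟩
  filter_upwards [hzero] with m hm
  exact W.starProjection_apply_eq_zero_iff.1 hm

theorem H2sub_Xstar_le_Ef [CompleteSpace X] {Λ : Set ℕ} (hΛ : BoundedDiffMult Λ) {f : H2 X}
    (hspec : spec f ⊆ Λ) (hcrc : CRC fun k : ℕ => f k) (N : ℕ) :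
    H2sub (Xstar f) ≤ Ef (bshift^[N] f) := by
  have : CompleteSpace (Ef (bshift^[N] f)) := (isClosed_Ef _).completeSpace_coe
  have hle : Xstar f ≤ (coeffSpan (Ef (bshift^[N] f))ᗮ)ᗮ :=
    Xstar_le_of_eventually_mem (Submodule.isClosed_orthogonal _)
      (eventually_mem_orthogonal_coeffSpan hΛ hspec hcrc N)
  calc H2sub (Xstar f) ≤ H2sub (coeffSpan (Ef (bshift^[N] f))ᗮ)ᗮ := fun _ hg n => hle (hg n)
    _ ≤ (Ef (bshift^[N] f))ᗮᗮ := H2sub_orthogonal_coeffSpan_le _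
    _ = Ef (bshift^[N] f) := Submodule.orthogonal_orthogonal _

theorem Xstar_eq_Xinf_general [CompleteSpace X] {Λ : Set ℕ} (hΛ : BoundedDiffMult Λ) {f : H2 X}
    (hspec : spec f ⊆ Λ) (hcrc : CRC fun k : ℕ => f k) : Xstar f = Xinf f :=
  (le_Xinf (isClosed_Xstar f) (H2sub_Xstar_le_Ef hΛ hspec hcrc)).antisymm (Xinf_le_Xstar f)

end

/-- For a lacunary series with c.r.c. coefficient sequence, `X_*(f) = X_∞(f)`. -/
theorem Xstar_eq_Xinf {X : Type*} [NormedAddCommGroup X] [InnerProductSpace ℂ X] [CompleteSpace X]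
    [TopologicalSpace.SeparableSpace X]
    (Λ : Set ℕ) (hΛ : HadLac Λ)
    (f : H2 X) (hspec : spec f ⊆ Λ) (hcrc : CRC fun k : ℕ => f k) :
    Xstar f = Xinf f :=
  Xstar_eq_Xinf_general hΛ.boundedDiffMult hspec hcrc

end
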